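/- Let d be a natural number, E = EuclideanSpace ℝ (Fin d), and M : E ≃L[ℝ] E a continuous linear equivalence with adjoint M† (with respect to the Euclidean inner product). Let p : E → ℝ be differentiable and everywhere positive, and define q : E → ℝ by q(y) = |det M| * p(M y), where det M is the determinant of the underlying linear map of M. Suppose ε : ℕ → ℝ, z : ℕ → E and x : ℕ → E satisfy, for every t ≥ 1, x_t = x_{t−1} + (ε_t^2/2) • M (M† (∇(Real.log ∘ p)(x_{t−1}))) + ε_t • M (z_t). Then the sequence y_t := M.symm (x_t) satisfies, for every t ≥ 1, y_t = y_{t−1} + (ε_t^2/2) • ∇(Real.log ∘ q)(y_{t−1}) + ε_t • z_t. (Discrete form of the preconditioned Langevin dynamics of Theorem 2 with S = 0: applying M⁻¹ turns it into the standard discretized Langevin dynamics for the transformed density q.) -/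

import Mathlib

/-!
Writing `log q = log |det M| + (log p) ∘ M`, the additive constant has zero derivative and the
chain rule gives `∇ (log q) y = M† (∇ (log p) (M y))`, the adjoint arising because the gradient
is the Riesz representative of the derivative. Evaluating at `y = M⁻¹ x` and applying the linear
map `M⁻¹` to the recursion for `x` yields the recursion for `M⁻¹ x`.
-/

/-- Chain rule for the gradient under a linear change of variables. -/
theorem hasGradientAt_comp_clm {E F : Type*}
    [NormedAddCommGroup E] [InnerProductSpace ℝ E] [CompleteSpace E]
    [NormedAddCommGroup F] [InnerProductSpace ℝ F] [CompleteSpace F]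
    (A : E →L[ℝ] F) {f : F → ℝ} {g : F} {y : E} (h : HasGradientAt f g (A y)) :
    HasGradientAt (fun y => f (A y)) (ContinuousLinearMap.adjoint A g) y := by
  rw [hasGradientAt_iff_hasFDerivAt] at h ⊢
  refine (h.comp y A.hasFDerivAt).congr_fderiv ?_
  ext v
  simp [ContinuousLinearMap.adjoint_inner_left]

theorem preconditioned_langevin_transform
    (d : ℕ)
    (M : EuclideanSpace ℝ (Fin d) ≃L[ℝ] EuclideanSpace ℝ (Fin d))
    (p : EuclideanSpace ℝ (Fin d) → ℝ)
    (hp : Differentiable ℝ p)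
    (hpos : ∀ x, 0 < p x)
    (q : EuclideanSpace ℝ (Fin d) → ℝ)
    (hq : ∀ y, q y =
      |(((M : EuclideanSpace ℝ (Fin d) →L[ℝ] EuclideanSpace ℝ (Fin d)) :
          EuclideanSpace ℝ (Fin d) →ₗ[ℝ] EuclideanSpace ℝ (Fin d))).det| * p (M y))
    (ε : ℕ → ℝ) (z x : ℕ → EuclideanSpace ℝ (Fin d))
    (hx : ∀ t, 1 ≤ t →
      x t = x (t - 1)
        + (ε t ^ 2 / 2) • (M (ContinuousLinearMap.adjoint
            (M : EuclideanSpace ℝ (Fin d) →L[ℝ] EuclideanSpace ℝ (Fin d))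
            (gradient (Real.log ∘ p) (x (t - 1)))))
        + ε t • M (z t)) :
    ∀ t, 1 ≤ t →
      M.symm (x t) = M.symm (x (t - 1))
        + (ε t ^ 2 / 2) • gradient (Real.log ∘ q) (M.symm (x (t - 1)))
        + ε t • z t := by
  have hdet : (((M : EuclideanSpace ℝ (Fin d) →L[ℝ] EuclideanSpace ℝ (Fin d)) :
      EuclideanSpace ℝ (Fin d) →ₗ[ℝ] EuclideanSpace ℝ (Fin d))).det ≠ 0 :=
    M.toLinearEquiv.isUnit_det'.ne_zero
  have hgrad : ∀ y, gradient (Real.log ∘ q) y = ContinuousLinearMap.adjoint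
      (M : EuclideanSpace ℝ (Fin d) →L[ℝ] EuclideanSpace ℝ (Fin d))
      (gradient (Real.log ∘ p) (M y)) := by
    intro y
    have hlog : Real.log ∘ q = fun y =>
        Real.log |(((M : EuclideanSpace ℝ (Fin d) →L[ℝ] EuclideanSpace ℝ (Fin d)) :
          EuclideanSpace ℝ (Fin d) →ₗ[ℝ] EuclideanSpace ℝ (Fin d))).det|
        + (Real.log ∘ p) (M y) := by
      funext y
      rw [Function.comp_apply, hq, Real.log_mul (abs_ne_zero.mpr hdet) (hpos _).ne']
      rfl
    have hd : DifferentiableAt ℝ (Real.log ∘ p) (M y) := (hp _).log (hpos _).ne'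
    have hM := hasGradientAt_comp_clm
      (M : EuclideanSpace ℝ (Fin d) →L[ℝ] EuclideanSpace ℝ (Fin d)) (y := y)
      hd.hasGradientAt
    rw [hlog]
    refine HasGradientAt.gradient ?_
    rw [hasGradientAt_iff_hasFDerivAt] at hM ⊢
    exact hM.const_add _
  intro t ht
  rw [hgrad, hx t ht]
  simp only [map_add, map_smul, ContinuousLinearEquiv.symm_apply_apply,
    ContinuousLinearEquiv.apply_symm_apply]
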